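/- arXiv:2103.14246 — 2 statements merged into one kernel-verified Lean document; each statement's English description precedes it below -/
import Mathlib

section
/- With the one-step Bellman setup, the residual error of the Taylor estimator satisfies ΔY − ΔŶ = δ − E[δ | 𝒢] almost surely, where δ := δ^Ṽ + δ^hot is the sum of the representation error and the Taylor remainder. -/
open MeasureTheory ProbabilityTheory Matrix

/-- The standard Gaussian measure on `ℝⁿ` (coordinates i.i.d. `N(0,1)`). -/
noncomputable def stdGaussian (n : ℕ) : Measure (Fin n → ℝ) :=
  Measure.pi fun _ => gaussianReal 0 1

/-- The gradient of `f : ℝⁿ → ℝ`, as a vector of partial derivatives. -/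
noncomputable def grad {n : ℕ} (f : (Fin n → ℝ) → ℝ) (x : Fin n → ℝ) : Fin n → ℝ :=
  fun i => fderiv ℝ f x (Pi.single i 1)

/-- The Hessian matrix of `f : ℝⁿ → ℝ`. -/
noncomputable def hess {n : ℕ} (f : (Fin n → ℝ) → ℝ) (x : Fin n → ℝ) :
    Matrix (Fin n) (Fin n) ℝ :=
  Matrix.of fun i j => fderiv ℝ (fun y => fderiv ℝ f y (Pi.single j 1)) x (Pi.single i 1)

/-!
Let `f(x, w)` be the next value reached from state `x` under noise `w`. The second-order model
`q(w) = y + ⟨z, w⟩ + ½⟨w, M w⟩` splits into its mean `y + ½ tr M` and the centred part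
`⟨z, w⟩ + ½ tr (M (w wᵀ - I))` that enters the Taylor estimator, so the Bellman equation gives
`ΔY - ΔŶ = (f - q)(X, W) - ∫ (f - q)(X, w) dγ(w)`. The state is `𝒢`-measurable and the noise is
independent of `𝒢`, so the integral is `E[δ | 𝒢]`. Only the first two moments of `W` matter.
-/

section Freezing

variable {Ω β γ E : Type*} {𝒢 mΩ : MeasurableSpace Ω} [MeasurableSpace β] [mγ : MeasurableSpace γ]
  {P : Measure Ω} [IsFiniteMeasure P] {X : Ω → β} {W : Ω → γ}

lemma map_restrict_prodMk_eq_prod (h𝒢 : 𝒢 ≤ mΩ) (hX : Measurable[𝒢] X) (hW : Measurable W)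
    (hindep : Indep (mγ.comap W) 𝒢 P) {s : Set Ω} (hs : MeasurableSet[𝒢] s) :
    (P.restrict s).map (fun ω => (X ω, W ω)) = ((P.restrict s).map X).prod (P.map W) := by
  have hX' : Measurable X := hX.mono h𝒢 le_rfl
  refine (Measure.prod_eq fun A B hA hB => ?_).symm
  rw [Measure.map_apply (hX'.prodMk hW) (hA.prod hB), Measure.map_apply hX' hA,
    Measure.map_apply hW hB, Measure.restrict_apply (hX'.prodMk hW (hA.prod hB)),
    Measure.restrict_apply (hX' hA), Set.mk_preimage_prod]
  calc P (X ⁻¹' A ∩ W ⁻¹' B ∩ s) = P (W ⁻¹' B ∩ (X ⁻¹' A ∩ s)) := by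
        rw [Set.inter_comm (X ⁻¹' A), Set.inter_assoc]
    _ = P (W ⁻¹' B) * P (X ⁻¹' A ∩ s) :=
        (Indep_iff _ _ P).1 hindep _ _ ⟨B, hB, rfl⟩ ((hX hA).inter hs)
    _ = P (X ⁻¹' A ∩ s) * P (W ⁻¹' B) := mul_comm _ _

lemma integrable_prod_map_restrict [NormedAddCommGroup E] (h𝒢 : 𝒢 ≤ mΩ) (hX : Measurable[𝒢] X)
    (hW : Measurable W) (hindep : Indep (mγ.comap W) 𝒢 P) {f : β × γ → E}
    (hf : StronglyMeasurable f) (hfint : Integrable (fun ω => f (X ω, W ω)) P)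
    {s : Set Ω} (hs : MeasurableSet[𝒢] s) :
    Integrable f (((P.restrict s).map X).prod (P.map W)) := by
  rw [← map_restrict_prodMk_eq_prod h𝒢 hX hW hindep hs,
    integrable_map_measure hf.aestronglyMeasurable
      ((hX.mono h𝒢 le_rfl).prodMk hW).aemeasurable]
  exact hfint.restrict

lemma ae_integrable_of_indep [NormedAddCommGroup E] (h𝒢 : 𝒢 ≤ mΩ) (hX : Measurable[𝒢] X)
    (hW : Measurable W) (hindep : Indep (mγ.comap W) 𝒢 P) {f : β × γ → E}
    (hf : StronglyMeasurable f) (hfint : Integrable (fun ω => f (X ω, W ω)) P) :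
    ∀ᵐ ω ∂P, Integrable (fun w => f (X ω, w)) (P.map W) := by
  have hprod := integrable_prod_map_restrict h𝒢 hX hW hindep hf hfint MeasurableSet.univ
  rw [Measure.restrict_univ] at hprod
  exact ae_of_ae_map (hX.mono h𝒢 le_rfl).aemeasurable hprod.prod_right_ae

theorem condExp_ae_eq_integral_of_indep [NormedAddCommGroup E] [NormedSpace ℝ E] [CompleteSpace E]
    (h𝒢 : 𝒢 ≤ mΩ) (hX : Measurable[𝒢] X) (hW : Measurable W)
    (hindep : Indep (mγ.comap W) 𝒢 P) {f : β × γ → E} (hf : StronglyMeasurable f)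
    (hfint : Integrable (fun ω => f (X ω, W ω)) P) :
    P[fun ω => f (X ω, W ω) | 𝒢] =ᵐ[P] fun ω => ∫ w, f (X ω, w) ∂(P.map W) := by
  have hX' : Measurable X := hX.mono h𝒢 le_rfl
  have hg : StronglyMeasurable fun x => ∫ w, f (x, w) ∂(P.map W) := hf.integral_prod_right'
  have hprod {s : Set Ω} (hs : MeasurableSet[𝒢] s) :=
    integrable_prod_map_restrict h𝒢 hX hW hindep hf hfint hs
  refine (ae_eq_condExp_of_forall_setIntegral_eq h𝒢 hfint (fun s hs _ => ?_) (fun s hs _ => ?_)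
    (hg.comp_measurable hX).aestronglyMeasurable).symm
  · exact (hprod hs).integral_prod_left.comp_measurable hX'
  · calc ∫ ω in s, ∫ w, f (X ω, w) ∂(P.map W) ∂P
        = ∫ x, ∫ w, f (x, w) ∂(P.map W) ∂((P.restrict s).map X) :=
          (integral_map hX'.aemeasurable hg.aestronglyMeasurable).symm
      _ = ∫ p, f p ∂(((P.restrict s).map X).prod (P.map W)) := (integral_prod f (hprod hs)).symm
      _ = ∫ p, f p ∂((P.restrict s).map fun ω => (X ω, W ω)) := by
          rw [map_restrict_prodMk_eq_prod h𝒢 hX hW hindep hs]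
      _ = ∫ ω in s, f (X ω, W ω) ∂P :=
          integral_map (hX'.prodMk hW).aemeasurable hf.aestronglyMeasurable

end Freezing

section QuadraticModel

variable {ι : Type*}

/-- The quadratic function on `ℝ^ι` with value `y`, gradient `z` and Hessian `M` at the origin,
as in a second-order Taylor expansion. An arbitrary `M` is allowed; the Hessian is then its
symmetric part. -/
noncomputable def quadraticModel [Fintype ι] (y : ℝ) (z : ι → ℝ) (M : Matrix ι ι ℝ)
    (w : ι → ℝ) : ℝ :=
  y + z ⬝ᵥ w + 1 / 2 * (w ⬝ᵥ M *ᵥ w)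

lemma quadraticModel_eq_mean_add_centered [Fintype ι] [DecidableEq ι] (y : ℝ) (z : ι → ℝ)
    (M : Matrix ι ι ℝ) (w : ι → ℝ) :
    quadraticModel y z M w =
      (y + 1 / 2 * M.trace) + (z ⬝ᵥ w + 1 / 2 * (M * (vecMulVec w w - 1)).trace) := by
  rw [mul_sub, mul_one, trace_sub, mul_vecMulVec, trace_vecMulVec, dotProduct_comm (M *ᵥ w) w,
    quadraticModel]
  ring

lemma measurable_quadraticModel [Fintype ι] {β : Type*} [MeasurableSpace β] {y : β → ℝ}
    {z : β → ι → ℝ} {M : β → Matrix ι ι ℝ} (hy : Measurable y) (hz : Measurable z)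
    (hM : ∀ i j, Measurable fun x => M x i j) :
    Measurable fun p : β × (ι → ℝ) => quadraticModel (y p.1) (z p.1) (M p.1) p.2 := by
  simp only [quadraticModel, dotProduct, mulVec]
  fun_prop

lemma dotProduct_mulVec_self_eq_sum [Fintype ι] (M : Matrix ι ι ℝ) (w : ι → ℝ) :
    w ⬝ᵥ M *ᵥ w = ∑ i, ∑ j, M i j * (w i * w j) := by
  simp only [dotProduct, mulVec, Finset.mul_sum]
  exact Finset.sum_congr rfl fun i _ => Finset.sum_congr rfl fun j _ => by ring

/-- White noise on `ℝ^ι`: a law with square-integrable coordinates, mean zero and identity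
covariance. Since the mean vanishes, the covariance is encoded by the second moments. -/
structure IsWhiteNoise [DecidableEq ι] (μ : Measure (ι → ℝ)) : Prop where
  memLp_eval : ∀ i, MemLp (fun w => w i) 2 μ
  integral_eval : ∀ i, ∫ w, w i ∂μ = 0
  integral_eval_mul_eval : ∀ i j, ∫ w, w i * w j ∂μ = (1 : Matrix ι ι ℝ) i j

namespace IsWhiteNoise

lemma pi [Fintype ι] [DecidableEq ι] {ν : ι → Measure ℝ} [∀ i, IsProbabilityMeasure (ν i)]
    (hLp : ∀ i, MemLp id 2 (ν i)) (hmean : ∀ i, ∫ x, x ∂(ν i) = 0)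
    (hvar : ∀ i, Var[id; ν i] = 1) :
    IsWhiteNoise (Measure.pi ν) where
  memLp_eval i := (hLp i).comp_measurePreserving (measurePreserving_eval ν i)
  integral_eval i := MeasureTheory.integral_eval.trans (hmean i)
  integral_eval_mul_eval i j := by
    obtain rfl | hij := eq_or_ne i j
    · calc ∫ w, w i * w i ∂(Measure.pi ν) = ∫ x, x * x ∂(ν i) :=
            integral_comp_eval (μ := ν) (f := fun x : ℝ => x * x) (by fun_prop)
        _ = Var[id; ν i] := by
            simp only [variance_of_integral_eq_zero aemeasurable_id (hmean i), id, sq]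
        _ = (1 : Matrix ι ι ℝ) i i := by rw [hvar, one_apply_eq]
    · have hindep : IndepFun (fun w : ι → ℝ => w i) (fun w => w j) (Measure.pi ν) :=
        (iIndepFun_pi (X := fun _ x => x) fun _ => aemeasurable_id).indepFun hij
      rw [hindep.integral_fun_mul_eq_mul_integral
          (measurable_pi_apply i).aestronglyMeasurable (measurable_pi_apply j).aestronglyMeasurable,
        MeasureTheory.integral_eval, hmean, zero_mul, one_apply_ne hij]

variable [DecidableEq ι] {μ : Measure (ι → ℝ)}

lemma integrable_eval [IsFiniteMeasure μ] (hμ : IsWhiteNoise μ) (i : ι) :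
    Integrable (fun w => w i) μ :=
  (hμ.memLp_eval i).integrable one_le_two

lemma integrable_eval_mul_eval (hμ : IsWhiteNoise μ) (i j : ι) :
    Integrable (fun w => w i * w j) μ :=
  (hμ.memLp_eval i).integrable_mul (hμ.memLp_eval j)

variable [Fintype ι]

lemma integrable_dotProduct [IsFiniteMeasure μ] (hμ : IsWhiteNoise μ) (z : ι → ℝ) :
    Integrable (fun w => z ⬝ᵥ w) μ :=
  integrable_finsetSum _ fun i _ => (hμ.integrable_eval i).const_mul (z i)

lemma integral_dotProduct [IsFiniteMeasure μ] (hμ : IsWhiteNoise μ) (z : ι → ℝ) :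
    ∫ w, z ⬝ᵥ w ∂μ = 0 := by
  simp only [dotProduct]
  rw [integral_finsetSum _ fun i _ => (hμ.integrable_eval i).const_mul (z i)]
  simp only [integral_const_mul, hμ.integral_eval, mul_zero, Finset.sum_const_zero]

lemma integrable_dotProduct_mulVec (hμ : IsWhiteNoise μ) (M : Matrix ι ι ℝ) :
    Integrable (fun w => w ⬝ᵥ M *ᵥ w) μ := by
  simp only [dotProduct_mulVec_self_eq_sum]
  exact integrable_finsetSum _ fun i _ => integrable_finsetSum _ fun j _ =>
    (hμ.integrable_eval_mul_eval i j).const_mul (M i j)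

lemma integral_dotProduct_mulVec (hμ : IsWhiteNoise μ) (M : Matrix ι ι ℝ) :
    ∫ w, w ⬝ᵥ M *ᵥ w ∂μ = M.trace := by
  have hint (i j : ι) : Integrable (fun w => M i j * (w i * w j)) μ :=
    (hμ.integrable_eval_mul_eval i j).const_mul (M i j)
  calc ∫ w, w ⬝ᵥ M *ᵥ w ∂μ = ∑ i, ∑ j, ∫ w, M i j * (w i * w j) ∂μ := by
        simp only [dotProduct_mulVec_self_eq_sum]
        rw [integral_finsetSum _ fun i _ => integrable_finsetSum _ fun j _ => hint i j]
        exact Finset.sum_congr rfl fun i _ => integral_finsetSum _ fun j _ => hint i j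
    _ = ∑ i, ∑ j, M i j * (1 : Matrix ι ι ℝ) i j := by
        simp only [integral_const_mul, hμ.integral_eval_mul_eval]
    _ = M.trace := by
        simp only [one_apply, mul_ite, mul_one, mul_zero, Finset.sum_ite_eq, Finset.mem_univ,
          if_true, trace, diag_apply]

lemma integrable_quadraticModel [IsFiniteMeasure μ] (hμ : IsWhiteNoise μ) (y : ℝ) (z : ι → ℝ)
    (M : Matrix ι ι ℝ) : Integrable (quadraticModel y z M) μ :=
  ((integrable_const y).add (hμ.integrable_dotProduct z)).add
    ((hμ.integrable_dotProduct_mulVec M).const_mul (1 / 2))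

lemma integral_quadraticModel [IsProbabilityMeasure μ] (hμ : IsWhiteNoise μ) (y : ℝ) (z : ι → ℝ)
    (M : Matrix ι ι ℝ) : ∫ w, quadraticModel y z M w ∂μ = y + 1 / 2 * M.trace := by
  have haffine : Integrable (fun w => y + z ⬝ᵥ w) μ :=
    (integrable_const y).add (hμ.integrable_dotProduct z)
  simp only [quadraticModel]
  rw [integral_add haffine ((hμ.integrable_dotProduct_mulVec M).const_mul (1 / 2)),
    integral_add (integrable_const y) (hμ.integrable_dotProduct z), integral_const_mul,
    hμ.integral_dotProduct, hμ.integral_dotProduct_mulVec, integral_const, probReal_univ, one_smul,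
    add_zero]

lemma integral_eq_integral_sub_quadraticModel_add [IsProbabilityMeasure μ] (hμ : IsWhiteNoise μ)
    {f : (ι → ℝ) → ℝ} {y : ℝ} {z : ι → ℝ} {M : Matrix ι ι ℝ}
    (hf : Integrable (fun w => f w - quadraticModel y z M w) μ) :
    ∫ w, f w ∂μ = ∫ w, (f w - quadraticModel y z M w) ∂μ + (y + 1 / 2 * M.trace) := by
  rw [← hμ.integral_quadraticModel y z M,
    ← integral_add hf (hμ.integrable_quadraticModel y z M)]
  simp only [sub_add_cancel]

end IsWhiteNoise

end QuadraticModel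

lemma isWhiteNoise_stdGaussian (n : ℕ) : IsWhiteNoise (_root_.stdGaussian n) :=
  .pi (fun _ => memLp_id_gaussianReal 2) (fun _ => integral_id_gaussianReal)
    fun _ => variance_id_gaussianReal

section Measurability

variable {α l m n : Type*} [MeasurableSpace α] [Fintype m]

lemma measurable_mulVec {A : α → Matrix l m ℝ} {v : α → m → ℝ}
    (hA : ∀ i j, Measurable fun a => A a i j) (hv : Measurable v) :
    Measurable fun a => A a *ᵥ v a :=
  measurable_pi_lambda _ fun i =>
    Finset.measurable_sum _ fun j _ => (hA i j).mul ((measurable_pi_apply j).comp hv)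

lemma measurable_matrix_mul_apply {A : α → Matrix l m ℝ} {B : α → Matrix m n ℝ}
    (hA : ∀ i j, Measurable fun a => A a i j) (hB : ∀ i j, Measurable fun a => B a i j)
    (i : l) (j : n) : Measurable fun a => (A a * B a) i j := by
  simp only [Matrix.mul_apply]
  fun_prop

lemma measurable_transpose_mulVec_grad {d : ℕ} {A : α → Matrix (Fin d) n ℝ}
    (hA : ∀ i j, Measurable fun a => A a i j) (f : (Fin d → ℝ) → ℝ) {φ : α → Fin d → ℝ}
    (hφ : Measurable φ) : Measurable fun a => (A a)ᵀ *ᵥ grad f (φ a) :=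
  measurable_mulVec (fun i j => hA j i)
    (measurable_pi_lambda _ fun _ => (measurable_fderiv_apply_const ℝ f _).comp hφ)

lemma measurable_transpose_mul_hess_mul_apply {d : ℕ} {A : α → Matrix (Fin d) n ℝ}
    (hA : ∀ i j, Measurable fun a => A a i j) (f : (Fin d → ℝ) → ℝ) {φ : α → Fin d → ℝ}
    (hφ : Measurable φ) (i j : n) :
    Measurable fun a => ((A a)ᵀ * hess f (φ a) * A a) i j :=
  measurable_matrix_mul_apply
    (measurable_matrix_mul_apply (fun i j => hA j i)
      fun _ _ => (measurable_fderiv_apply_const ℝ _ _).comp hφ) hA i j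

end Measurability

theorem taylor_estimator_residual_general {Ω β ι : Type*} [Fintype ι] [DecidableEq ι]
    {𝒢 mΩ : MeasurableSpace Ω} [MeasurableSpace β] {P : Measure Ω} [IsProbabilityMeasure P]
    (h𝒢 : 𝒢 ≤ mΩ) {W : Ω → ι → ℝ} (hW : Measurable W) (hnoise : IsWhiteNoise (P.map W))
    (hindep : Indep (MeasurableSpace.comap W inferInstance) 𝒢 P)
    {X : Ω → β} (hX : Measurable[𝒢] X)
    {f : β → (ι → ℝ) → ℝ} (hf : Measurable fun p : β × (ι → ℝ) => f p.1 p.2) {V L : β → ℝ}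
    (hV : ∀ x, V x = L x + ∫ w, f x w ∂(P.map W))
    {y : β → ℝ} (hy : Measurable y) {z : β → ι → ℝ} (hz : Measurable z)
    {M : β → Matrix ι ι ℝ} (hM : ∀ i j, Measurable fun x => M x i j) {δ : Ω → ℝ}
    (hδ : ∀ ω, δ ω = f (X ω) (W ω) - quadraticModel (y (X ω)) (z (X ω)) (M (X ω)) (W ω))
    (hδint : Integrable δ P) :
    (fun ω => f (X ω) (W ω) - V (X ω) - (-L (X ω) + z (X ω) ⬝ᵥ W ω
      + 1 / 2 * (M (X ω) * (vecMulVec (W ω) (W ω) - 1)).trace)) =ᵐ[P]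
      fun ω => δ ω - (P[δ|𝒢]) ω := by
  have := Measure.isProbabilityMeasure_map (μ := P) hW.aemeasurable
  have hdefect : StronglyMeasurable fun p : β × (ι → ℝ) =>
      f p.1 p.2 - quadraticModel (y p.1) (z p.1) (M p.1) p.2 :=
    (hf.sub (measurable_quadraticModel hy hz hM)).stronglyMeasurable
  obtain rfl := funext hδ
  filter_upwards [condExp_ae_eq_integral_of_indep h𝒢 hX hW hindep hdefect hδint,
    ae_integrable_of_indep h𝒢 hX hW hindep hdefect hδint] with ω hcondExp hint
  rw [hV, hnoise.integral_eq_integral_sub_quadraticModel_add hint, hcondExp,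
    quadraticModel_eq_mean_add_centered]
  ring

/-- **Residual error of the Taylor estimator.**
With the one-step Bellman setup, `ΔY − ΔŶ = δ − E[δ | 𝒢]` almost surely, where
`δ := δ^Ṽ + δ^hot` is the sum of the representation error and the Taylor remainder. -/
theorem taylor_estimator_residual
    {Ω : Type*} (𝒢 : MeasurableSpace Ω) [mΩ : MeasurableSpace Ω]
    (P : Measure Ω) [IsProbabilityMeasure P]
    {n : ℕ} (h𝒢 : 𝒢 ≤ mΩ)
    -- the noise W : i.i.d. standard normal coordinates, independent of 𝒢
    (W : Ω → Fin n → ℝ) (hWmeas : Measurable W)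
    (hWlaw : Measure.map W P = stdGaussian n)
    (hWindep : Indep (MeasurableSpace.comap W inferInstance) 𝒢 P)
    -- the current state X is 𝒢-measurable; dynamics data F, Σ, L
    (X : Ω → Fin n → ℝ) (hX : Measurable[𝒢] X)
    (F : (Fin n → ℝ) → Fin n → ℝ) (hF : Measurable F)
    (S : (Fin n → ℝ) → Matrix (Fin n) (Fin n) ℝ) (hS : ∀ i j, Measurable fun x => S x i j)
    (L : (Fin n → ℝ) → ℝ) (hL : Measurable L)
    -- X̄ := X + F(X), X' := X̄ + Σ(X) W
    (Xb : Ω → Fin n → ℝ) (hXb : ∀ ω, Xb ω = X ω + F (X ω))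
    (X' : Ω → Fin n → ℝ) (hX' : ∀ ω, X' ω = Xb ω + (S (X ω)).mulVec (W ω))
    -- the next-step value function V' and the one-step Bellman value V
    (V' : (Fin n → ℝ) → ℝ) (hV'meas : Measurable V')
    (hV'int : Integrable (fun ω => V' (X' ω)) P)
    (V : (Fin n → ℝ) → ℝ)
    (hV : ∀ x, V x = L x + ∫ w, V' (x + F x + (S x).mulVec w) ∂(stdGaussian n))
    -- the C² value function approximation Ṽ and associated Ȳ, Z̄, M̄
    (Vt : (Fin n → ℝ) → ℝ) (hVt : ContDiff ℝ 2 Vt)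
    (hVtint : Integrable (fun ω => Vt (X' ω)) P)
    (Zb : Ω → Fin n → ℝ) (hZb : ∀ ω, Zb ω = (S (X ω))ᵀ.mulVec (grad Vt (Xb ω)))
    (Mb : Ω → Matrix (Fin n) (Fin n) ℝ)
    (hMb : ∀ ω, Mb ω = (S (X ω))ᵀ * hess Vt (Xb ω) * S (X ω))
    (hZbint : ∀ i, Integrable (fun ω => Zb ω i) P)
    (hMbint : ∀ i j, Integrable (fun ω => Mb ω i j) P)
    -- the Taylor remainder δ^hot and the representation error δ^Ṽ; δ := δ^Ṽ + δ^hot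
    (δhot : Ω → ℝ)
    (hδhot : ∀ ω, δhot ω = Vt (X' ω) - (Vt (Xb ω) + (∑ i, Zb ω i * W ω i)
      + (1 / 2) * ∑ i, W ω i * (Mb ω).mulVec (W ω) i))
    (δVt : Ω → ℝ) (hδVt : ∀ ω, δVt ω = V' (X' ω) - Vt (X' ω))
    (δ : Ω → ℝ) (hδ : ∀ ω, δ ω = δVt ω + δhot ω)
    -- the true backward difference ΔY and the Taylor estimator ΔŶ
    (ΔY : Ω → ℝ) (hΔY : ∀ ω, ΔY ω = V' (X' ω) - V (X ω))
    (ΔYh : Ω → ℝ)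
    (hΔYh : ∀ ω, ΔYh ω = -L (X ω) + (∑ i, Zb ω i * W ω i)
      + (1 / 2) * Matrix.trace (Mb ω * (Matrix.vecMulVec (W ω) (W ω) - 1)))
    -- integrability of all displayed random variables
    (hΔYint : Integrable ΔY P) (hΔYhint : Integrable ΔYh P)
    (hδint : Integrable δ P)
    (hLint : Integrable (fun ω => L (X ω)) P)
    (hVint : Integrable (fun ω => V (X ω)) P) :
    (fun ω => ΔY ω - ΔYh ω) =ᵐ[P] (fun ω => δ ω - (P[δ|𝒢]) ω) := by
  have hmean : Measurable fun x => x + F x := measurable_id.add hF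
  have hnext : Measurable fun p : (Fin n → ℝ) × (Fin n → ℝ) => V' (p.1 + F p.1 + S p.1 *ᵥ p.2) :=
    hV'meas.comp ((hmean.comp measurable_fst).add
      (measurable_mulVec (fun i j => (hS i j).comp measurable_fst) measurable_snd))
  have hδ_defect : ∀ ω, δ ω = V' (X ω + F (X ω) + S (X ω) *ᵥ W ω) -
      quadraticModel (Vt (X ω + F (X ω))) ((S (X ω))ᵀ *ᵥ grad Vt (X ω + F (X ω)))
        ((S (X ω))ᵀ * hess Vt (X ω + F (X ω)) * S (X ω)) (W ω) := fun ω => by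
    rw [hδ, hδVt, hδhot, sub_add_sub_cancel, hX', hMb, hZb, hXb]
    rfl
  simp only [hΔY, hΔYh, hX', hZb, hMb, hXb]
  exact taylor_estimator_residual_general h𝒢 hWmeas (hWlaw ▸ isWhiteNoise_stdGaussian n) hWindep
    hX hnext (hWlaw ▸ hV) (hVt.continuous.measurable.comp hmean)
    (measurable_transpose_mulVec_grad hS Vt hmean)
    (measurable_transpose_mul_hess_mul_apply hS Vt hmean) hδ_defect hδint
end

section
/- Let W₀,…,W_{N−1} : Ω → ℝⁿ be mutually independent random vectors, each with i.i.d. standard normal coordinates, and let D₀,…,D_{N−1} : Ω → ℝⁿ be bounded measurable random vectors such that for each i the vector W_i is independent of the σ-algebra generated by (W₀,…,W_{i−1}, D₀,…,D_i). Define Θ_N := exp(∑_{j=0}^{N−1} (−½‖D_j‖² + ⟨D_j, W_j⟩)) and Q := P.withDensity(Θ_N). Then Q is a probability measure, and under Q the random vectors W_i^Q := W_i − D_i, i = 0,…,N−1, are mutually independent and each has i.i.d. standard normal coordinates. -/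
open MeasureTheory ProbabilityTheory

/-!
Fix a drift value `d`. Multiplying the standard Gaussian density by `exp (-‖d‖² / 2 + ⟨d, w⟩)`
completes the square and yields the Gaussian law centred at `d`, so the translate `w - d` is again
standard Gaussian, whatever `d` is. Since `W i` is independent of the past, the past and with it
the drift `D i` may be frozen when integrating over `W i`: the `i`-th factor of the likelihood
ratio, tested on `W i - D i ∈ B i`, integrates to the constant `γ (B i)`, where `γ` is the standard
Gaussian law. Peeling off the latest index repeatedly computes the joint law of the vectors
`W i - D i` on boxes.
-/

open scoped ENNReal

section Density

variable {Ω E : Type*} [MeasurableSpace Ω] [MeasurableSpace E]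

lemma map_withDensity_apply (μ : Measure Ω) {L : Ω → ℝ≥0∞} {T : Ω → E} (hL : Measurable L)
    (hT : Measurable T) {s : Set E} (hs : MeasurableSet s) :
    (μ.withDensity L).map T s = ∫⁻ ω, L ω * s.indicator 1 (T ω) ∂μ := by
  have hind : Measurable (s.indicator (1 : E → ℝ≥0∞)) := measurable_one.indicator hs
  rw [← lintegral_indicator_one hs, lintegral_map hind hT]
  exact lintegral_withDensity_eq_lintegral_mul _ hL (hind.comp hT)

variable {ι : Type*} [Fintype ι] {X : ι → Type*} [∀ i, MeasurableSpace (X i)]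

lemma map_withDensity_prod_apply_univ_pi (μ : Measure Ω) {L : ι → Ω → ℝ≥0∞}
    {T : ∀ i, Ω → X i} (hL : ∀ i, Measurable (L i)) (hT : ∀ i, Measurable (T i))
    {B : ∀ i, Set (X i)} (hB : ∀ i, MeasurableSet (B i)) :
    (μ.withDensity fun ω => ∏ i, L i ω).map (fun ω i => T i ω) (Set.univ.pi B) =
      ∫⁻ ω, ∏ i, (L i ω * (B i).indicator 1 (T i ω)) ∂μ := by
  rw [map_withDensity_apply μ (by fun_prop) (by fun_prop) (.univ_pi hB)]
  simp only [← Finset.coe_univ, Set.indicator_pi_one_apply, Finset.prod_mul_distrib]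

lemma map_withDensity_prod_pi {Y : ι → Type*} [∀ i, MeasurableSpace (Y i)]
    {μ : ∀ i, Measure (X i)} [∀ i, IsProbabilityMeasure (μ i)]
    {ν : ∀ i, Measure (Y i)} [∀ i, SigmaFinite (ν i)]
    {L : ∀ i, X i → ℝ≥0∞} (hL : ∀ i, Measurable (L i))
    {T : ∀ i, X i → Y i} (hT : ∀ i, Measurable (T i))
    (hν : ∀ i, ((μ i).withDensity (L i)).map (T i) = ν i) :
    ((Measure.pi μ).withDensity fun x => ∏ i, L i (x i)).map (fun x i => T i (x i)) =
      Measure.pi ν := by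
  refine (Measure.pi_eq fun B hB => ?_).symm
  have hfactor (i : ι) : Measurable fun x => L i x * (B i).indicator 1 (T i x) :=
    (hL i).mul ((measurable_one.indicator (hB i)).comp (hT i))
  calc ((Measure.pi μ).withDensity fun x => ∏ i, L i (x i)).map (fun x i => T i (x i))
        (Set.univ.pi B)
      = ∫⁻ x, ∏ i, (L i (x i) * (B i).indicator 1 (T i (x i))) ∂Measure.pi μ :=
        map_withDensity_prod_apply_univ_pi _ (fun i => (hL i).comp (measurable_pi_apply i))
          (fun i => (hT i).comp (measurable_pi_apply i)) hB
    _ = ∏ i, ∫⁻ x, L i (x i) * (B i).indicator 1 (T i (x i)) ∂Measure.pi μ :=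
        lintegral_prod_eq_prod_lintegral_of_indepFun _ _
          (iIndepFun_pi fun i => (hfactor i).aemeasurable)
          fun i => (hfactor i).comp (measurable_pi_apply i)
    _ = ∏ i, ν i (B i) := by
        refine Finset.prod_congr rfl fun i _ => ?_
        rw [(measurePreserving_eval μ i).lintegral_comp (hfactor i),
          ← map_withDensity_apply (μ i) (hL i) (hT i) (hB i), hν]

end Density

section GaussianShift

lemma gaussianReal_withDensity_exp (m : ℝ) (v : NNReal) (d : ℝ) :
    (gaussianReal m v).withDensity
        (fun x => ENNReal.ofReal (Real.exp (-(v / 2) * d ^ 2 + d * (x - m)))) =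
      gaussianReal (m + v * d) v := by
  rcases eq_or_ne v 0 with rfl | hv
  · simp [dirac_withDensity]
  rw [gaussianReal_of_var_ne_zero _ hv, gaussianReal_of_var_ne_zero _ hv,
    ← withDensity_mul _ (measurable_gaussianPDF m v) (by fun_prop)]
  congr with x
  rw [Pi.mul_apply, gaussianPDF, gaussianPDF, ← ENNReal.ofReal_mul (gaussianPDFReal_nonneg _ _ _),
    gaussianPDFReal, gaussianPDFReal, mul_assoc, ← Real.exp_add]
  congr 3
  field_simp
  ring

variable {κ : Type*} [Fintype κ]

/-- The density `exp (-‖d‖² / 2 + ⟨d, w⟩)` at `w` of the Gaussian law with mean `d` and identity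
covariance, relative to the standard Gaussian law: the likelihood ratio of one time step. -/
noncomputable def gaussianShiftDensity (d w : κ → ℝ) : ℝ≥0∞ :=
  ENNReal.ofReal (Real.exp (-(1 / 2) * (∑ k, d k ^ 2) + ∑ k, d k * w k))

lemma measurable_gaussianShiftDensity :
    Measurable fun p : (κ → ℝ) × (κ → ℝ) => gaussianShiftDensity p.1 p.2 := by
  unfold gaussianShiftDensity
  fun_prop

lemma gaussianShiftDensity_eq_prod (d w : κ → ℝ) :
    gaussianShiftDensity d w =
      ∏ k, ENNReal.ofReal (Real.exp (-(1 / 2) * d k ^ 2 + d k * w k)) := by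
  rw [gaussianShiftDensity, Finset.mul_sum, ← Finset.sum_add_distrib, Real.exp_sum,
    ENNReal.ofReal_prod_of_nonneg fun _ _ => (Real.exp_pos _).le]

lemma map_sub_const_withDensity_gaussianShiftDensity (d : κ → ℝ) :
    ((Measure.pi fun _ : κ => gaussianReal 0 1).withDensity (gaussianShiftDensity d)).map
        (fun w => w - d) =
      Measure.pi fun _ => gaussianReal 0 1 := by
  rw [funext (gaussianShiftDensity_eq_prod d)]
  refine map_withDensity_prod_pi
    (L := fun k x => ENNReal.ofReal (Real.exp (-(1 / 2) * d k ^ 2 + d k * x)))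
    (T := fun k x => x - d k) (fun k => by fun_prop) (fun k => by fun_prop) fun k => ?_
  have hshift : (gaussianReal 0 1).withDensity
      (fun x => ENNReal.ofReal (Real.exp (-(1 / 2) * d k ^ 2 + d k * x))) =
        gaussianReal (d k) 1 := by
    simpa using gaussianReal_withDensity_exp 0 1 (d k)
  rw [hshift, gaussianReal_map_sub_const, sub_self]

end GaussianShift

section IndependentOfPast

variable {Ω : Type*} {mΩ : MeasurableSpace Ω} {P : Measure Ω}

lemma lintegral_comp_of_indepFun [IsFiniteMeasure P] {F E : Type*} [MeasurableSpace F]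
    [MeasurableSpace E] {U : Ω → F} {W : Ω → E} (hUW : IndepFun U W P) (hU : Measurable U)
    (hW : Measurable W) {f : F → E → ℝ≥0∞} (hf : Measurable f.uncurry) :
    ∫⁻ ω, f (U ω) (W ω) ∂P = ∫⁻ ω, ∫⁻ w, f (U ω) w ∂P.map W ∂P := by
  calc ∫⁻ ω, f (U ω) (W ω) ∂P
      = ∫⁻ p, f.uncurry p ∂(P.map U).prod (P.map W) := by
        rw [← hUW.map_prod_eq_prod_map_map hU.aemeasurable hW.aemeasurable,
          lintegral_map hf (hU.prodMk hW)]
        rfl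
    _ = ∫⁻ ω, ∫⁻ w, f (U ω) w ∂P.map W ∂P := by
        rw [lintegral_prod _ hf.aemeasurable, lintegral_map hf.lintegral_prod_right' hU]
        rfl

variable {ι : Type*} [LinearOrder ι] (𝓖 : Filtration ι mΩ) {F E : ι → Type*}
  [∀ i, MeasurableSpace (F i)] [∀ i, MeasurableSpace (E i)]
  {D : ∀ i, Ω → F i} {W : ∀ i, Ω → E i}

lemma lintegral_prod_of_indep_past [IsProbabilityMeasure P]
    (hD : ∀ i, Measurable[𝓖 i] (D i)) (hW : ∀ i, Measurable (W i))
    (hpast : ∀ i j, j < i → Measurable[𝓖 i] (W j))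
    (hindep : ∀ i, Indep (MeasurableSpace.comap (W i) inferInstance) (𝓖 i) P)
    {g : ∀ i, F i → E i → ℝ≥0∞} (hg : ∀ i, Measurable (g i).uncurry) {c : ι → ℝ≥0∞}
    (hc : ∀ i d, ∫⁻ w, g i d w ∂P.map (W i) = c i) (s : Finset ι) :
    ∫⁻ ω, ∏ i ∈ s, g i (D i ω) (W i ω) ∂P = ∏ i ∈ s, c i := by
  induction s using Finset.induction_on_max with
  | empty => simp
  | insert a s hlt ih =>
    have ha : a ∉ s := fun h => (hlt a h).false
    set Y : Ω → ℝ≥0∞ := fun ω => ∏ i ∈ s, g i (D i ω) (W i ω) with hY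
    have hYpast : Measurable[𝓖 a] Y :=
      Finset.measurable_fun_prod (m := 𝓖 a) s fun i hi =>
        (hg i).comp (((hD i).mono (𝓖.mono (hlt i hi).le) le_rfl).prodMk (hpast a i (hlt i hi)))
    have hU : Measurable[𝓖 a] fun ω => (Y ω, D a ω) := hYpast.prodMk (hD a)
    have hUW : IndepFun (fun ω => (Y ω, D a ω)) (W a) P :=
      (indep_of_indep_of_le_right (hindep a) hU.comap_le).symm
    have hga (d : F a) : Measurable (g a d) := (hg a).of_uncurry_left
    calc ∫⁻ ω, ∏ i ∈ insert a s, g i (D i ω) (W i ω) ∂P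
        = ∫⁻ ω, Y ω * g a (D a ω) (W a ω) ∂P := by
          simp only [hY, Finset.prod_insert ha, mul_comm]
      _ = ∫⁻ ω, ∫⁻ w, Y ω * g a (D a ω) w ∂P.map (W a) ∂P :=
          lintegral_comp_of_indepFun (f := fun u w => u.1 * g a u.2 w) hUW
            (hU.mono (𝓖.le a) le_rfl) (hW a)
            (measurable_fst.fst.mul ((hg a).comp (measurable_fst.snd.prodMk measurable_snd)))
      _ = ∫⁻ ω, Y ω * c a ∂P := by
          simp only [lintegral_const_mul _ (hga _), hc]
      _ = ∏ i ∈ insert a s, c i := by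
          rw [lintegral_mul_const _ (hYpast.mono (𝓖.le a) le_rfl), ih, Finset.prod_insert ha,
            mul_comm]

theorem hasLaw_pi_withDensity_prod_of_indep_past [Fintype ι] [IsProbabilityMeasure P]
    (hD : ∀ i, Measurable[𝓖 i] (D i)) (hW : ∀ i, Measurable (W i))
    (hpast : ∀ i j, j < i → Measurable[𝓖 i] (W j))
    (hindep : ∀ i, Indep (MeasurableSpace.comap (W i) inferInstance) (𝓖 i) P)
    {X : ι → Type*} [∀ i, MeasurableSpace (X i)] {ν : ∀ i, Measure (X i)} [∀ i, SigmaFinite (ν i)]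
    {L : ∀ i, F i → E i → ℝ≥0∞} (hL : ∀ i, Measurable (L i).uncurry)
    {T : ∀ i, F i → E i → X i} (hT : ∀ i, Measurable (T i).uncurry)
    (hν : ∀ i d, ((P.map (W i)).withDensity (L i d)).map (T i d) = ν i) :
    HasLaw (fun ω i => T i (D i ω) (W i ω)) (Measure.pi ν)
      (P.withDensity fun ω => ∏ i, L i (D i ω) (W i ω)) := by
  have hDW (i : ι) : Measurable fun ω => (D i ω, W i ω) :=
    ((hD i).mono (𝓖.le i) le_rfl).prodMk (hW i)
  have hTDW (i : ι) : Measurable fun ω => T i (D i ω) (W i ω) := (hT i).comp (hDW i)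
  refine ⟨(measurable_pi_lambda _ hTDW).aemeasurable, (Measure.pi_eq fun B hB => ?_).symm⟩
  refine (map_withDensity_prod_apply_univ_pi P (fun i => (hL i).comp (hDW i)) hTDW hB).trans ?_
  refine lintegral_prod_of_indep_past 𝓖 hD hW hpast hindep
    (g := fun i d w => L i d w * (B i).indicator 1 (T i d w))
    (fun i => (hL i).mul ((measurable_one.indicator (hB i)).comp (hT i))) (fun i d => ?_) _
  rw [← map_withDensity_apply _ (hL i).of_uncurry_left (hT i).of_uncurry_left (hB i), hν]

end IndependentOfPast

section Girsanov

variable {Ω ι : Type*} {mΩ : MeasurableSpace Ω}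

section PastFiltration

variable [Preorder ι] {E F : Type*} [MeasurableSpace E] [MeasurableSpace F]
  {W : ι → Ω → E} {D : ι → Ω → F}

/-- The information available just before the noise `W i` is revealed: the earlier noises together
with the drifts up to and including `D i`. -/
def pastFiltration (hW : ∀ i, Measurable (W i)) (hD : ∀ i, Measurable (D i)) :
    Filtration ι mΩ where
  seq i := (⨆ j, ⨆ _ : j < i, MeasurableSpace.comap (W j) inferInstance) ⊔
    (⨆ j, ⨆ _ : j ≤ i, MeasurableSpace.comap (D j) inferInstance)
  mono' _ _ hab := sup_le_sup
    (biSup_mono fun _ hj => hj.trans_le hab) (biSup_mono fun _ hj => hj.trans hab)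
  le' _ := sup_le (iSup₂_le fun j _ => (hW j).comap_le) (iSup₂_le fun j _ => (hD j).comap_le)

lemma measurable_pastFiltration_drift (hW : ∀ i, Measurable (W i)) (hD : ∀ i, Measurable (D i))
    (i : ι) : Measurable[pastFiltration hW hD i] (D i) :=
  measurable_iff_comap_le.2 (le_sup_of_le_right (le_iSup₂_of_le i le_rfl le_rfl))

lemma measurable_pastFiltration_noise (hW : ∀ i, Measurable (W i)) (hD : ∀ i, Measurable (D i))
    (i j : ι) (hji : j < i) : Measurable[pastFiltration hW hD i] (W j) :=
  measurable_iff_comap_le.2 (le_sup_of_le_left (le_iSup₂_of_le j hji le_rfl))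

end PastFiltration

lemma iIndepFun_and_hasLaw_of_hasLaw_pi [Fintype ι] {P : Measure Ω} {X : ι → Type*}
    [∀ i, MeasurableSpace (X i)] {ν : ∀ i, Measure (X i)} [∀ i, IsProbabilityMeasure (ν i)]
    {Y : ∀ i, Ω → X i} (h : HasLaw (fun ω i => Y i ω) (Measure.pi ν) P) :
    iIndepFun Y P ∧ ∀ i, HasLaw (Y i) (ν i) P := by
  have := h.isProbabilityMeasure
  have hY (i : ι) : HasLaw (Y i) (ν i) P := (measurePreserving_eval ν i).fun_comp_hasLaw h
  exact ⟨(iIndepFun_iff_hasLaw_pi_pi hY).2 h, hY⟩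

theorem discrete_time_girsanov_general [Fintype ι] [LinearOrder ι] {κ : Type*} [Fintype κ]
    {P : Measure Ω} [IsProbabilityMeasure P] (𝓖 : Filtration ι mΩ) {W D : ι → Ω → κ → ℝ}
    (hD : ∀ i, Measurable[𝓖 i] (D i)) (hW : ∀ i, Measurable (W i))
    (hpast : ∀ i j, j < i → Measurable[𝓖 i] (W j))
    (hindep : ∀ i, Indep (MeasurableSpace.comap (W i) inferInstance) (𝓖 i) P)
    (hlaw : ∀ i, P.map (W i) = Measure.pi fun _ => gaussianReal 0 1)
    {Θ : Ω → ℝ}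
    (hΘ : ∀ ω, Θ ω =
      Real.exp (∑ j, (-(1 / 2) * (∑ k, (D j ω k) ^ 2) + ∑ k, D j ω k * W j ω k)))
    {Q : Measure Ω} (hQ : Q = P.withDensity fun ω => ENNReal.ofReal (Θ ω)) :
    IsProbabilityMeasure Q ∧
      iIndepFun (fun i ω => W i ω - D i ω) Q ∧
      ∀ i, Q.map (fun ω => W i ω - D i ω) = Measure.pi fun _ => gaussianReal 0 1 := by
  have hdensity (ω : Ω) : ENNReal.ofReal (Θ ω) = ∏ j, gaussianShiftDensity (D j ω) (W j ω) := by
    rw [hΘ, Real.exp_sum, ENNReal.ofReal_prod_of_nonneg fun _ _ => (Real.exp_pos _).le]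
    rfl
  have hjoint : HasLaw (fun ω i => W i ω - D i ω)
      (Measure.pi fun _ => Measure.pi fun _ => gaussianReal 0 1) Q := by
    simp_rw [hQ, hdensity]
    exact hasLaw_pi_withDensity_prod_of_indep_past 𝓖 hD hW hpast hindep
      (T := fun _ d w => w - d) (fun _ => measurable_gaussianShiftDensity)
      (fun _ => measurable_snd.sub measurable_fst)
      fun i d => by rw [hlaw, map_sub_const_withDensity_gaussianShiftDensity]
  obtain ⟨hiIndep, hmarginal⟩ := iIndepFun_and_hasLaw_of_hasLaw_pi hjoint
  exact ⟨hjoint.isProbabilityMeasure, hiIndep, fun i => (hmarginal i).map_eq⟩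

end Girsanov

/-- **Discrete-time Girsanov theorem.**
Let `W₀,…,W_{N−1}` be mutually independent random vectors with i.i.d. standard normal
coordinates and `D₀,…,D_{N−1}` bounded measurable random vectors such that each `Wᵢ` is
independent of the σ-algebra generated by `(W₀,…,W_{i−1}, D₀,…,D_i)`.  With
`Θ_N := exp(∑ⱼ (−½‖Dⱼ‖² + ⟨Dⱼ, Wⱼ⟩))` and `Q := P.withDensity Θ_N`, the measure `Q` is a
probability measure and under `Q` the vectors `Wᵢ − Dᵢ` are mutually independent, each with
i.i.d. standard normal coordinates. -/
theorem discrete_time_girsanov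
    {Ω : Type*} [mΩ : MeasurableSpace Ω]
    (P : Measure Ω) [IsProbabilityMeasure P]
    {n N : ℕ}
    (W D : Fin N → Ω → Fin n → ℝ)
    (hWmeas : ∀ i, Measurable (W i)) (hDmeas : ∀ i, Measurable (D i))
    (hWlaw : ∀ i, Measure.map (W i) P = stdGaussian n)
    (hWiIndep : iIndepFun W P)
    (hDbound : ∀ i, ∃ C, ∀ ω j, |D i ω j| ≤ C)
    (hWpast : ∀ i : Fin N,
      Indep (MeasurableSpace.comap (W i) inferInstance)
        ((⨆ j : Fin N, ⨆ _ : j < i, MeasurableSpace.comap (W j) inferInstance) ⊔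
          (⨆ j : Fin N, ⨆ _ : j ≤ i, MeasurableSpace.comap (D j) inferInstance)) P)
    (Θ : Ω → ℝ)
    (hΘ : ∀ ω, Θ ω =
      Real.exp (∑ j, (-(1 / 2) * (∑ k, (D j ω k) ^ 2) + ∑ k, D j ω k * W j ω k)))
    (Q : Measure Ω) (hQ : Q = P.withDensity fun ω => ENNReal.ofReal (Θ ω)) :
    IsProbabilityMeasure Q ∧
      iIndepFun (fun i ω => W i ω - D i ω) Q ∧
      ∀ i, Measure.map (fun ω => W i ω - D i ω) Q = stdGaussian n := by
  exact discrete_time_girsanov_general _ (measurable_pastFiltration_drift hWmeas hDmeas) hWmeas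
    (measurable_pastFiltration_noise hWmeas hDmeas) hWpast hWlaw hΘ hQ
end
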